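/- Let X be a Hausdorff topological space, let φ : ℝ × X → X be continuous, and let E ⊆ X be a compact set. Assume the non-trapping condition: for every x ∈ E there exists t > 0 such that φ(t, x) ∉ E. Then there exists a finite constant κ₀ > 0 such that for every x ∈ E there exists t with 0 < t < κ₀ and φ(t, x) ∉ E; i.e., every trajectory starting in E leaves E within time κ₀. -/

import Mathlib

/- A point of `K` that leaves a closed set `F` at time `t` does so together with all nearby points
of `K` at the same time `t`. By compactness finitely many such times serve all of `K`, and any
strict upper bound of these times is a uniform bound. -/

open Set Topology

theorem exists_finite_subfamily_notMem_of_isCompact {ι X Y : Type*} [TopologicalSpace X]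
    [TopologicalSpace Y] {f : ι → X → Y} {I : Set ι} {K : Set X} {F : Set Y}
    (hK : IsCompact K) (hF : IsClosed F) (hf : ∀ i ∈ I, ContinuousOn (f i) K)
    (hI : ∀ x ∈ K, ∃ i ∈ I, f i x ∉ F) :
    ∃ J ⊆ I, J.Finite ∧ ∀ x ∈ K, ∃ i ∈ J, f i x ∉ F := by
  choose i hiI hiF using hI
  have escape_nhds (x) (hx : x ∈ K) : {y | f (i x hx) y ∉ F} ∈ 𝓝[K] x :=
    hf _ (hiI x hx) x hx (hF.isOpen_compl.mem_nhds (hiF x hx))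
  obtain ⟨s, hKs⟩ := hK.elim_nhdsWithin_subcover' _ escape_nhds
  refine ⟨(fun x : K => i x x.2) '' s, image_subset_iff.2 fun x _ => hiI x x.2,
    s.finite_toSet.image _, fun y hy => ?_⟩
  obtain ⟨x, hxs, hxy⟩ := mem_iUnion₂.1 (hKs hy)
  exact ⟨i x x.2, mem_image_of_mem _ hxs, hxy⟩

theorem uniform_exit_time_bound_general {T X Y : Type*} [Preorder T] [IsDirectedOrder T]
    [NoMaxOrder T] [TopologicalSpace X] [TopologicalSpace Y] {φ : T → X → Y} {K : Set X}
    {F : Set Y} {t₀ : T} (hφ : ∀ t > t₀, ContinuousOn (φ t) K) (hK : IsCompact K)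
    (hF : IsClosed F) (hexit : ∀ x ∈ K, ∃ t, t₀ < t ∧ φ t x ∉ F) :
    ∃ κ₀, t₀ < κ₀ ∧ ∀ x ∈ K, ∃ t, t₀ < t ∧ t < κ₀ ∧ φ t x ∉ F := by
  obtain ⟨J, hJ, hJfin, hJexit⟩ :=
    exists_finite_subfamily_notMem_of_isCompact (I := Ioi t₀) hK hF hφ hexit
  have : Nonempty T := ⟨t₀⟩
  obtain ⟨b, hb⟩ := (hJfin.insert t₀).bddAbove
  obtain ⟨κ₀, hbκ₀⟩ := exists_gt b
  refine ⟨κ₀, (hb (mem_insert t₀ J)).trans_lt hbκ₀, fun x hx => ?_⟩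
  obtain ⟨t, htJ, htF⟩ := hJexit x hx
  exact ⟨t, hJ htJ, (hb (mem_insert_of_mem t₀ htJ)).trans_lt hbκ₀, htF⟩

/-- If `E` is a compact subset of a Hausdorff space `X`, `φ : ℝ × X → X` is continuous,
and every trajectory starting in `E` leaves `E` at some positive time (non-trapping),
then there is a finite uniform bound `κ₀ > 0` such that every trajectory starting in
`E` leaves `E` within time `κ₀`. -/
theorem uniform_exit_time_bound {X : Type*} [TopologicalSpace X] [T2Space X]
    (φ : ℝ × X → X) (hφ : Continuous φ) (E : Set X) (hE : IsCompact E)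
    (hnt : ∀ x ∈ E, ∃ t : ℝ, 0 < t ∧ φ (t, x) ∉ E) :
    ∃ κ₀ : ℝ, 0 < κ₀ ∧ ∀ x ∈ E, ∃ t : ℝ, 0 < t ∧ t < κ₀ ∧ φ (t, x) ∉ E :=
  uniform_exit_time_bound_general (φ := fun t x => φ (t, x))
    (fun t _ => (hφ.comp (Continuous.prodMk_right t)).continuousOn) hE hE.isClosed hnt
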